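/- arXiv:2504.05785 — 6 statements merged into one kernel-verified Lean document; each statement's English description precedes it below -/
import Mathlib

section
/- Let x ∈ 𝒳 and z ∈ {0,1}^N be feasible for the chance-constrained problem in the sense that Σ_{s : z_s = 1} π^(s) ≥ 1 − τ and c(x, ξ^(s̃)) ≤ 0 for every s̃ with z_s̃ = 1. Suppose that for every x ∈ 𝒳 the map ξ ↦ c(x, ξ) is quasiconvex. If s ∈ {1,…,N} satisfies z_s = 0 and ξ^(s) lies in the convex hull of {ξ^(s̃) : z_s̃ = 1}, then c(x, ξ^(s)) ≤ 0, and the pair (x, z + e_s) (i.e., z with its s-th coordinate changed to 1) remains feasible: Σ_{s̃ : (z+e_s)_s̃ = 1} π^(s̃) ≥ 1 − τ and c(x, ξ^(s̃)) ≤ 0 for every s̃ with (z+e_s)_s̃ = 1. -/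
open scoped Classical
open Finset

noncomputable section

variable {N d p : ℕ}

/-- The set of CCP-feasible points. -/
def ccpFeasible (X : Set (Fin d → ℝ)) (c : (Fin d → ℝ) → (Fin p → ℝ) → ℝ)
    (ξ : Fin N → (Fin p → ℝ)) (π : Fin N → ℝ) (τ : ℝ) : Set (Fin d → ℝ) :=
  {x | x ∈ X ∧ 1 - τ ≤ ∑ s ∈ Finset.univ.filter (fun s => c x (ξ s) ≤ 0), π s}

/-- Infimum, in the extended reals, of `F` over `A` (`⊤` if `A = ∅`). -/
def einf (F : (Fin d → ℝ) → ℝ) (A : Set (Fin d → ℝ)) : EReal :=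
  sInf ((fun x => (F x : EReal)) '' A)

/-- `F*_τ`: optimal value of the chance-constrained problem. -/
def Fstar (X : Set (Fin d → ℝ)) (F : (Fin d → ℝ) → ℝ)
    (c : (Fin d → ℝ) → (Fin p → ℝ) → ℝ) (ξ : Fin N → (Fin p → ℝ))
    (π : Fin N → ℝ) (τ : ℝ) : EReal :=
  einf F (ccpFeasible X c ξ π τ)

/-- `ν(S)`: optimal value of the `S`-subproblem. -/
def nuVal (X : Set (Fin d → ℝ)) (F : (Fin d → ℝ) → ℝ)
    (c : (Fin d → ℝ) → (Fin p → ℝ) → ℝ) (ξ : Fin N → (Fin p → ℝ))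
    (S : Finset (Fin N)) : EReal :=
  einf F {x | x ∈ X ∧ ∀ s ∈ S, c x (ξ s) ≤ 0}

/-- Safe set. -/
def IsSafeSet (X : Set (Fin d → ℝ)) (F : (Fin d → ℝ) → ℝ)
    (c : (Fin d → ℝ) → (Fin p → ℝ) → ℝ) (ξ : Fin N → (Fin p → ℝ))
    (π : Fin N → ℝ) (τ : ℝ) (Plus : Finset (Fin N)) : Prop :=
  einf F {x | x ∈ ccpFeasible X c ξ π τ ∧ ∀ s ∈ Plus, c x (ξ s) ≤ 0}
    = Fstar X F c ξ π τ

/-- Pruned set. -/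
def IsPrunedSet (X : Set (Fin d → ℝ)) (F : (Fin d → ℝ) → ℝ)
    (c : (Fin d → ℝ) → (Fin p → ℝ) → ℝ) (ξ : Fin N → (Fin p → ℝ))
    (π : Fin N → ℝ) (τ : ℝ) (Minus : Finset (Fin N)) : Prop :=
  einf F {x | x ∈ X ∧
      1 - τ ≤ ∑ s ∈ Finset.univ.filter (fun s => s ∉ Minus ∧ c x (ξ s) ≤ 0), π s}
    = Fstar X F c ξ π τ

/-- Minimal subset. -/
def IsMinimalSubset (π : Fin N → ℝ) (τ : ℝ) (S : Finset (Fin N)) : Prop :=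
  1 - τ ≤ ∑ s ∈ S, π s ∧ ∀ t ∈ S, ∑ s ∈ S, π s < 1 - τ + π t

/-- Feasibility of a decision together with the set `J` of scenarios in which it must satisfy the
constraint: `J` carries weight at least `ρ`, and the constraint `f (ξ t) ≤ b` holds for `t ∈ J`.
In the chance-constrained problem `f = c x`, `b = 0`, `ρ = 1 - τ`, and `J` is the support of the
binary vector `z`. -/
def IsFeasibleSelection {ι E β M : Type*} [LE β] [AddCommMonoid M] [LE M]
    (f : E → β) (b : β) (ξ : ι → E) (π : ι → M) (ρ : M) (J : Finset ι) : Prop :=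
  ρ ≤ ∑ t ∈ J, π t ∧ ∀ t ∈ J, f (ξ t) ≤ b

theorem le_of_mem_convexHull_of_quasiconvexOn {𝕜 E β : Type*} [Semiring 𝕜] [PartialOrder 𝕜]
    [AddCommMonoid E] [Module 𝕜 E] [LE β] {f : E → β} {K S : Set E} {b : β} {y : E}
    (hf : QuasiconvexOn 𝕜 K f) (hSK : S ⊆ K) (hS : ∀ x ∈ S, f x ≤ b)
    (hy : y ∈ convexHull 𝕜 S) : f y ≤ b :=
  have hsub : S ⊆ {x ∈ K | f x ≤ b} := fun x hx => ⟨hSK hx, hS x hx⟩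
  (convexHull_min hsub (hf b) hy).2

theorem filter_update_eq_insert {ι α : Type*} [Fintype ι] [DecidableEq ι] [DecidableEq α]
    (z : ι → α) (s : ι) (a : α) :
    univ.filter (fun t => Function.update z s a t = a) =
      insert s (univ.filter fun t => z t = a) := by
  ext t
  by_cases h : t = s <;> simp [h]

theorem IsFeasibleSelection.insert_of_le {ι E β M : Type*} [DecidableEq ι] [LE β]
    [AddCommMonoid M] [Preorder M] [AddLeftMono M] {f : E → β} {b : β} {ξ : ι → E} {π : ι → M}
    {ρ : M} {J : Finset ι} {s : ι} (hJ : IsFeasibleSelection f b ξ π ρ J) (hπ : 0 ≤ π s)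
    (hs : f (ξ s) ≤ b) : IsFeasibleSelection f b ξ π ρ (insert s J) := by
  have hweight : ∑ t ∈ J, π t ≤ ∑ t ∈ insert s J, π t :=
    sum_le_sum_of_subset_of_nonneg (subset_insert s J) fun t ht htJ =>
      (eq_of_mem_insert_of_notMem ht htJ).symm ▸ hπ
  exact ⟨hJ.1.trans hweight, (forall_mem_insert s J _).2 ⟨hs, hJ.2⟩⟩

theorem statement_0_general {𝕜 ι E β M : Type*} [Semiring 𝕜] [PartialOrder 𝕜] [AddCommMonoid E]
    [Module 𝕜 E] [DecidableEq ι] [LE β] [AddCommMonoid M] [Preorder M] [AddLeftMono M]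
    {f : E → β} {b : β} {ξ : ι → E} {π : ι → M} {ρ : M} {J : Finset ι} {s : ι} {K : Set E}
    (hf : QuasiconvexOn 𝕜 K f) (hξ : ∀ t ∈ J, ξ t ∈ K) (hπ : 0 ≤ π s)
    (hJ : IsFeasibleSelection f b ξ π ρ J) (hs : ξ s ∈ convexHull 𝕜 (ξ '' J)) :
    f (ξ s) ≤ b ∧ IsFeasibleSelection f b ξ π ρ (insert s J) :=
  have hfs : f (ξ s) ≤ b := le_of_mem_convexHull_of_quasiconvexOn hf
    (Set.image_subset_iff.2 hξ) (Set.forall_mem_image.2 hJ.2) hs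
  ⟨hfs, hJ.insert_of_le hπ hfs⟩

theorem statement_0 {N d p : ℕ} (hN : 1 ≤ N) (hd : 1 ≤ d) (hp : 1 ≤ p)
    (X : Set (Fin d → ℝ)) (c : (Fin d → ℝ) → (Fin p → ℝ) → ℝ)
    (ξ : Fin N → (Fin p → ℝ)) (π : Fin N → ℝ) (τ : ℝ)
    (hπ : ∀ s, 0 < π s) (hπsum : ∑ s, π s = 1) (hτ0 : 0 < τ) (hτ1 : τ < 1)
    (hqc : ∀ x ∈ X, QuasiconvexOn ℝ Set.univ (c x))
    (x : Fin d → ℝ) (z : Fin N → ℝ) (hx : x ∈ X)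
    (hz01 : ∀ s, z s = 0 ∨ z s = 1)
    (hzprob : 1 - τ ≤ ∑ t ∈ Finset.univ.filter (fun t => z t = 1), π t)
    (hzc : ∀ t, z t = 1 → c x (ξ t) ≤ 0)
    (s : Fin N) (hzs : z s = 0)
    (hconv : ξ s ∈ convexHull ℝ (ξ '' {t | z t = 1})) :
    c x (ξ s) ≤ 0 ∧
    (1 - τ ≤ ∑ t ∈ Finset.univ.filter (fun t => Function.update z s 1 t = 1), π t) ∧
    (∀ t, Function.update z s 1 t = 1 → c x (ξ t) ≤ 0) := by
  simpa [IsFeasibleSelection, ← filter_update_eq_insert] using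
    statement_0_general (J := univ.filter fun t => z t = 1) (hqc x hx) (by simp) (hπ s).le
      ⟨hzprob, by simpa using hzc⟩ (by simpa using hconv)
end
end

section
/- Assume 𝒳 is nonempty and compact, F is continuous, c(·, ξ^(s̃)) is continuous for every s̃, and the set of CCP-feasible points is nonempty. Let ⊕ ⊆ {1,…,N} be a safe set, let F̂ be a real number with F̂ ≥ F*_τ, and let S ⊆ ⊕. If every x ∈ 𝒳 with F(x) ≤ F̂ and c(x, ξ^(s̃)) ≤ 0 for all s̃ ∈ S satisfies c(x, ξ^(s)) ≤ 0, then ⊕ ∪ {s} is a safe set. -/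
open scoped Classical
open Finset

noncomputable section

variable {N d p : ℕ}

/-!
Sublevel sets of the lower semicontinuous constraint functions are closed and there are finitely
many scenarios, so the probability of the satisfied scenarios is upper semicontinuous in `x`.  Hence
the CCP-feasible points satisfying the scenarios of the safe set form a compact set, on which `F`
attains its minimum `F*_τ ≤ F̂`.  The implication puts this minimizer in the region where scenario
`s` holds, so imposing `s` does not change the optimal value.
-/

open Filter Topology

section Semicontinuity

variable {E ι β M : Type*} [TopologicalSpace E] [LinearOrder β] {K : Set E} {g : ι → E → β}

theorem upperSemicontinuousOn_sum_filter_le [AddCommMonoid M] [Preorder M] [IsOrderedAddMonoid M]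
    {I : Finset ι} {w : ι → M} (hw : ∀ i ∈ I, 0 ≤ w i)
    (hg : ∀ i ∈ I, LowerSemicontinuousOn (g i) K) (a : β) :
    UpperSemicontinuousOn (fun x => ∑ i ∈ I with g i x ≤ a, w i) K := by
  intro x hx y hy
  -- Near `x` every constraint violated at `x` stays violated, so the sum can only lose terms.
  have violated : ∀ᶠ z in 𝓝[K] x, ∀ i ∈ I, a < g i x → a < g i z :=
    (eventually_all_finset I).2 fun i hi =>
      eventually_imp_distrib_left.2 fun hix => hg i hi x hx a hix
  filter_upwards [violated] with z hz
  have sum_le : ∑ i ∈ I with g i z ≤ a, w i ≤ ∑ i ∈ I with g i x ≤ a, w i := by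
    refine sum_le_sum_of_subset_of_nonneg (fun i hi => ?_) fun i hi _ => hw i (mem_filter.1 hi).1
    obtain ⟨hiI, hiz⟩ := mem_filter.1 hi
    exact mem_filter.2 ⟨hiI, not_lt.1 fun hix => (hz i hiI hix).not_ge hiz⟩
  exact sum_le.trans_lt hy

theorem isCompact_setOf_forall_le {I : Set ι} (hK : IsCompact K)
    (hg : ∀ i ∈ I, LowerSemicontinuousOn (g i) K) (a : β) :
    IsCompact {x | x ∈ K ∧ ∀ i ∈ I, g i x ≤ a} := by
  have exists_closed : ∀ i ∈ I, ∃ V, IsClosed V ∧ K ∩ g i ⁻¹' Set.Iic a = K ∩ V :=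
    fun i hi => lowerSemicontinuousOn_iff_preimage_Iic.1 (hg i hi) a
  choose! V hV hKV using exists_closed
  have eq_inter : {x | x ∈ K ∧ ∀ i ∈ I, g i x ≤ a} = K ∩ ⋂ i ∈ I, V i := by
    ext x
    simp only [Set.mem_ofPred_eq, Set.mem_inter_iff, Set.mem_iInter₂]
    refine and_congr_right fun hx => forall₂_congr fun i hi => ?_
    simpa [hx] using Set.ext_iff.1 (hKV i hi) x
  rw [eq_inter]
  exact hK.inter_right (isClosed_biInter hV)

end Semicontinuity

section ExtendedInfimum

variable {F : (Fin d → ℝ) → ℝ} {A : Set (Fin d → ℝ)} {x : Fin d → ℝ}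

theorem einf_eq_of_isMinOn (hx : x ∈ A) (hmin : IsMinOn F A x) : einf F A = F x :=
  IsLeast.csInf_eq ⟨Set.mem_image_of_mem _ hx,
    Set.forall_mem_image.2 fun _ hy => EReal.coe_le_coe (hmin hy)⟩

theorem nonempty_of_einf_lt_top (h : einf F A < ⊤) : A.Nonempty :=
  let ⟨_, hA, _⟩ := sInf_lt_iff.1 h
  Set.Nonempty.of_image ⟨_, hA⟩

end ExtendedInfimum

/-- The CCP-feasible points that satisfy in addition every scenario of `T`; `T` is safe when `F` has
the same infimum over this set as over all CCP-feasible points. -/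
def ccpFeasibleWith (X : Set (Fin d → ℝ)) (c : (Fin d → ℝ) → (Fin p → ℝ) → ℝ)
    (ξ : Fin N → (Fin p → ℝ)) (π : Fin N → ℝ) (τ : ℝ) (T : Finset (Fin N)) :
    Set (Fin d → ℝ) :=
  {x | x ∈ ccpFeasible X c ξ π τ ∧ ∀ t ∈ T, c x (ξ t) ≤ 0}

section SafeSets

variable {X : Set (Fin d → ℝ)} {F : (Fin d → ℝ) → ℝ} {c : (Fin d → ℝ) → (Fin p → ℝ) → ℝ}
  {ξ : Fin N → (Fin p → ℝ)} {π : Fin N → ℝ} {τ : ℝ}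

theorem isCompact_ccpFeasible (hπ : ∀ t, 0 ≤ π t) (hX : IsCompact X)
    (hc : ∀ t, LowerSemicontinuousOn (fun x => c x (ξ t)) X) :
    IsCompact (ccpFeasible X c ξ π τ) :=
  (upperSemicontinuousOn_sum_filter_le (fun t _ => hπ t) (fun t _ => hc t)
    0).isCompact_inter_preimage_Ici hX (1 - τ)

theorem isCompact_ccpFeasibleWith (hπ : ∀ t, 0 ≤ π t) (hX : IsCompact X)
    (hc : ∀ t, LowerSemicontinuousOn (fun x => c x (ξ t)) X) (T : Finset (Fin N)) :
    IsCompact (ccpFeasibleWith X c ξ π τ T) :=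
  isCompact_setOf_forall_le (g := fun t x => c x (ξ t)) (I := T)
    (isCompact_ccpFeasible hπ hX hc) (fun t _ => (hc t).mono fun _ hx => hx.1) 0

theorem ccpFeasibleWith_insert (s : Fin N) (T : Finset (Fin N)) :
    ccpFeasibleWith X c ξ π τ (insert s T) =
      ccpFeasibleWith X c ξ π τ T ∩ {x | c x (ξ s) ≤ 0} := by
  ext x
  simp only [ccpFeasibleWith, forall_mem_insert, Set.mem_ofPred_eq, Set.mem_inter_iff]
  tauto

theorem IsSafeSet.insert_of_isMinOn {T : Finset (Fin N)} {s : Fin N} {x : Fin d → ℝ}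
    (hsafe : IsSafeSet X F c ξ π τ T) (hx : x ∈ ccpFeasibleWith X c ξ π τ T)
    (hmin : IsMinOn F (ccpFeasibleWith X c ξ π τ T) x) (hxs : c x (ξ s) ≤ 0) :
    IsSafeSet X F c ξ π τ (insert s T) :=
  calc
    einf F (ccpFeasibleWith X c ξ π τ (insert s T))
      = einf F (ccpFeasibleWith X c ξ π τ T ∩ {x | c x (ξ s) ≤ 0}) := by
        rw [ccpFeasibleWith_insert]
    _ = F x := einf_eq_of_isMinOn ⟨hx, hxs⟩ (hmin.on_subset Set.inter_subset_left)
    _ = einf F (ccpFeasibleWith X c ξ π τ T) := (einf_eq_of_isMinOn hx hmin).symm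
    _ = Fstar X F c ξ π τ := hsafe

theorem IsSafeSet.exists_isMinOn {T : Finset (Fin N)} (hsafe : IsSafeSet X F c ξ π τ T)
    (hfin : Fstar X F c ξ π τ < ⊤) (hπ : ∀ t, 0 ≤ π t) (hX : IsCompact X)
    (hF : LowerSemicontinuousOn F X) (hc : ∀ t, LowerSemicontinuousOn (fun x => c x (ξ t)) X) :
    ∃ x ∈ ccpFeasibleWith X c ξ π τ T,
      IsMinOn F (ccpFeasibleWith X c ξ π τ T) x ∧ F x = Fstar X F c ξ π τ := by
  have hne : (ccpFeasibleWith X c ξ π τ T).Nonempty :=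
    nonempty_of_einf_lt_top (hsafe.trans_lt hfin)
  obtain ⟨x, hx, hmin⟩ := (hF.mono fun _ hx => hx.1.1).exists_isMinOn hne
    (isCompact_ccpFeasibleWith hπ hX hc T)
  exact ⟨x, hx, hmin, (einf_eq_of_isMinOn hx hmin).symm.trans hsafe⟩

end SafeSets

theorem statement_1_general (X : Set (Fin d → ℝ)) (F : (Fin d → ℝ) → ℝ)
    (c : (Fin d → ℝ) → (Fin p → ℝ) → ℝ) (ξ : Fin N → (Fin p → ℝ))
    (π : Fin N → ℝ) (τ : ℝ) (hπ : ∀ t, 0 ≤ π t)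
    (hXcpt : IsCompact X) (hF : LowerSemicontinuousOn F X)
    (hc : ∀ t, LowerSemicontinuousOn (fun x => c x (ξ t)) X)
    (Plus : Finset (Fin N)) (hsafe : IsSafeSet X F c ξ π τ Plus)
    (Fhat : ℝ) (hFhat : Fstar X F c ξ π τ ≤ (Fhat : EReal))
    (S : Finset (Fin N)) (hS : S ⊆ Plus) (s : Fin N)
    (hcond : ∀ x ∈ X, F x ≤ Fhat → (∀ t ∈ S, c x (ξ t) ≤ 0) → c x (ξ s) ≤ 0) :
    IsSafeSet X F c ξ π τ (insert s Plus) := by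
  obtain ⟨x, hx, hmin, hFx⟩ :=
    hsafe.exists_isMinOn (hFhat.trans_lt (EReal.coe_lt_top Fhat)) hπ hXcpt hF hc
  have hx_le : F x ≤ Fhat := EReal.coe_le_coe_iff.1 (hFx.trans_le hFhat)
  have hxs : c x (ξ s) ≤ 0 := hcond x hx.1.1 hx_le fun t ht => hx.2 t (hS ht)
  exact hsafe.insert_of_isMinOn hx hmin hxs

theorem statement_1 {N d p : ℕ}
    (hN : 1 ≤ N) (hd : 1 ≤ d) (hp : 1 ≤ p)
    (X : Set (Fin d → ℝ)) (F : (Fin d → ℝ) → ℝ)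
    (c : (Fin d → ℝ) → (Fin p → ℝ) → ℝ) (ξ : Fin N → (Fin p → ℝ))
    (π : Fin N → ℝ) (τ : ℝ)
    (hπ : ∀ s, 0 < π s) (hπsum : ∑ s, π s = 1) (hτ0 : 0 < τ) (hτ1 : τ < 1)
    (hXne : X.Nonempty) (hXcpt : IsCompact X) (hF : Continuous F)
    (hc : ∀ t, Continuous (fun x => c x (ξ t)))
    (hfeas : (ccpFeasible X c ξ π τ).Nonempty)
    (Plus : Finset (Fin N)) (hsafe : IsSafeSet X F c ξ π τ Plus)
    (Fhat : ℝ) (hFhat : Fstar X F c ξ π τ ≤ (Fhat : EReal))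
    (S : Finset (Fin N)) (hS : S ⊆ Plus) (s : Fin N)
    (hcond : ∀ x ∈ X, F x ≤ Fhat → (∀ t ∈ S, c x (ξ t) ≤ 0) → c x (ξ s) ≤ 0) :
    IsSafeSet X F c ξ π τ (insert s Plus) :=
  statement_1_general X F c ξ π τ (fun t => (hπ t).le) hXcpt hF.continuousOn.lowerSemicontinuousOn
    (fun t => (hc t).continuousOn.lowerSemicontinuousOn) Plus hsafe Fhat hFhat S hS s hcond
end
end

section
/- Assume that for every x ∈ 𝒳 the map ξ ↦ c(x, ξ) is quasiconvex. If ⊕ ⊆ {1,…,N} is a safe set, then the (possibly larger) set {s ∈ {1,…,N} : ξ^(s) ∈ conv({ξ^(s̃) : s̃ ∈ ⊕})} is also a safe set. -/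
open scoped Classical
open Finset

noncomputable section

variable {N d p : ℕ}

/-!
For `x ∈ X`, quasiconvexity makes `{z | c x z ≤ 0}` convex. If this set contains the scenarios
indexed by `Plus`, it contains their convex hull, so enforcing all the scenarios in the hull leaves
the constrained feasible region, not just its optimal value, unchanged.
-/

section Convexity

variable {𝕜 E : Type*} [Semiring 𝕜] [PartialOrder 𝕜] [AddCommMonoid E]

theorem forall_mem_of_mem_convexHull_image_iff [Module 𝕜 E] {ι : Type*} {C : Set E}
    (hC : Convex 𝕜 C) (ξ : ι → E) (S : Set ι) :
    (∀ i, ξ i ∈ convexHull 𝕜 (ξ '' S) → ξ i ∈ C) ↔ ∀ i ∈ S, ξ i ∈ C := by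
  refine ⟨fun h i hi => h i (subset_convexHull 𝕜 _ (Set.mem_image_of_mem ξ hi)), fun h i hi => ?_⟩
  exact convexHull_min (Set.image_subset_iff.mpr h) hC hi

theorem convex_setOf_le_of_quasiconvexOn_univ [SMul 𝕜 E] {β : Type*} [LE β]
    {f : E → β} (hf : QuasiconvexOn 𝕜 Set.univ f) (r : β) : Convex 𝕜 {z | f z ≤ r} := by
  simpa only [Set.mem_univ, true_and] using hf r

end Convexity

section SafeSets

variable {X : Set (Fin d → ℝ)} {F : (Fin d → ℝ) → ℝ} {c : (Fin d → ℝ) → (Fin p → ℝ) → ℝ}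
  {ξ : Fin N → (Fin p → ℝ)} {π : Fin N → ℝ} {τ : ℝ}

theorem isSafeSet_congr {S T : Finset (Fin N)}
    (h : ∀ x ∈ ccpFeasible X c ξ π τ, (∀ s ∈ S, c x (ξ s) ≤ 0) ↔ ∀ s ∈ T, c x (ξ s) ≤ 0) :
    IsSafeSet X F c ξ π τ S ↔ IsSafeSet X F c ξ π τ T := by
  have same_points : {x | x ∈ ccpFeasible X c ξ π τ ∧ ∀ s ∈ S, c x (ξ s) ≤ 0} =
      {x | x ∈ ccpFeasible X c ξ π τ ∧ ∀ s ∈ T, c x (ξ s) ≤ 0} :=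
    Set.ext fun x => and_congr_right (h x)
  rw [IsSafeSet, IsSafeSet, same_points]

theorem statement_3_general (hconv : ∀ x ∈ X, Convex ℝ {z | c x z ≤ 0})
    (Plus : Finset (Fin N)) :
    IsSafeSet X F c ξ π τ
        (Finset.univ.filter (fun s => ξ s ∈ convexHull ℝ (ξ '' ↑Plus))) ↔
      IsSafeSet X F c ξ π τ Plus := by
  refine isSafeSet_congr fun x hx => ?_
  simpa only [Finset.mem_filter, Finset.mem_univ, true_and, Set.mem_ofPred_eq, Finset.mem_coe]
    using forall_mem_of_mem_convexHull_image_iff (hconv x hx.1) ξ (Plus : Set (Fin N))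

end SafeSets

theorem statement_3 {N d p : ℕ}
    (hN : 1 ≤ N) (hd : 1 ≤ d) (hp : 1 ≤ p)
    (X : Set (Fin d → ℝ)) (F : (Fin d → ℝ) → ℝ)
    (c : (Fin d → ℝ) → (Fin p → ℝ) → ℝ) (ξ : Fin N → (Fin p → ℝ))
    (π : Fin N → ℝ) (τ : ℝ)
    (hπ : ∀ s, 0 < π s) (hπsum : ∑ s, π s = 1) (hτ0 : 0 < τ) (hτ1 : τ < 1)
    (hqc : ∀ x ∈ X, QuasiconvexOn ℝ Set.univ (c x))
    (Plus : Finset (Fin N)) (hsafe : IsSafeSet X F c ξ π τ Plus) :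
    IsSafeSet X F c ξ π τ
      (Finset.univ.filter (fun s => ξ s ∈ convexHull ℝ (ξ '' ↑Plus))) :=
  (statement_3_general (fun x hx => convex_setOf_le_of_quasiconvexOn_univ (hqc x hx) 0) Plus).mpr
    hsafe
end
end

section
/- Assume that for every x ∈ 𝒳 the map ξ ↦ c(x, ξ) is quasiconvex. Fix S ⊆ {1,…,N}, let Ξ = conv({ξ^(s̃) : s̃ ∈ S}), let V(S) = {s̃ ∈ S : ξ^(s̃) is an extreme point of Ξ} and N(S) = {s ∈ {1,…,N} : ξ^(s) ∈ Ξ}. Then for every pair (x, z) with x ∈ 𝒳, z ∈ {0,1}^N, Σ_{s̃ : z_s̃ = 1} π^(s̃) ≥ 1 − τ and c(x, ξ^(s̃)) ≤ 0 whenever z_s̃ = 1, there exists z′ ∈ {0,1}^N with z′ ≥ z componentwise such that (x, z′) is feasible in the same sense and z′ satisfies all the inequalities z′_s ≥ Σ_{s̃∈V(S)} z′_s̃ − |V(S)| + 1 for every s ∈ N(S) \ V(S). Consequently, adding these inequalities to the mixed-integer reformulation does not increase the optimal value F*_τ. -/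
open scoped Classical
open Finset

noncomputable section

variable {N d p : ℕ}

/-- `V(S)`: indices of scenarios in `S` that are extreme points (vertices) of
`Ξ = conv {ξ t | t ∈ S}`. -/
def vertSet (ξ : Fin N → (Fin p → ℝ)) (S : Finset (Fin N)) : Finset (Fin N) :=
  S.filter (fun t => ξ t ∈ Set.extremePoints ℝ (convexHull ℝ (ξ '' ↑S)))

/-- `N(S)`: indices of all scenarios contained in `Ξ = conv {ξ t | t ∈ S}`. -/
def hullSet (ξ : Fin N → (Fin p → ℝ)) (S : Finset (Fin N)) : Finset (Fin N) :=
  Finset.univ.filter (fun s => ξ s ∈ convexHull ℝ (ξ '' ↑S))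

/-! Replace `z` by the indicator `z'` of all scenarios that `x` satisfies. This only raises entries
of `z`, and it keeps the logical constraints. If `z'` is `1` at all vertices of `Ξ`, then `x`
satisfies these vertices; the scenarios satisfied by `x` form a convex set, so it contains the
convex hull of the vertices, which is `Ξ` because `Ξ` is a polytope. If `z'` is `0` at some vertex,
the right-hand side of the inequality is at most `0`. -/

section Polytope

variable {𝕜 E ι : Type*} [Field 𝕜] [LinearOrder 𝕜] [IsStrictOrderedRing 𝕜]
  [AddCommGroup E] [Module 𝕜 E]

lemma mem_extremePoints_convexHull_insert {s : Set E} {x : E} (hx : x ∉ convexHull 𝕜 s) :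
    x ∈ (convexHull 𝕜 (insert x s)).extremePoints 𝕜 := by
  rcases s.eq_empty_or_nonempty with rfl | hs
  · simp
  refine mem_extremePoints_iff_left.2 ⟨subset_convexHull 𝕜 _ (Set.mem_insert x s), ?_⟩
  simp only [convexHull_insert hs, convexJoin_singleton_left, Set.mem_iUnion, exists_prop]
  rintro _ ⟨u, hu, a, b, -, hb, hab, rfl⟩ _ ⟨v, hv, a', b', -, hb', hab', rfl⟩
    ⟨r, t, hr, ht, hrt, hcomb⟩
  by_contra hne
  have hb_pos : 0 < b := hb.lt_of_ne' fun hb0 => hne (by simp_all)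
  have hweight : 0 < r * b + t * b' := by positivity
  -- Cancelling the multiples of `x` in `hcomb` exhibits `x` as a combination of `u` and `v`.
  have hx_eq : (r * b / (r * b + t * b')) • u + (t * b' / (r * b + t * b')) • v = x := by
    have hcancel : (r * b) • u + (t * b') • v = (r * b + t * b') • x := by
      have hcoeff : r * a + t * a' = 1 - (r * b + t * b') := by
        linear_combination r * hab + t * hab' + hrt
      linear_combination (norm := module) hcomb - hcoeff • x
    rw [div_eq_inv_mul, div_eq_inv_mul, mul_smul _ (r * b), mul_smul _ (t * b'),
      ← smul_add, hcancel, inv_smul_smul₀ hweight.ne']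
  exact hx (hx_eq ▸ convex_iff_div.1 (convex_convexHull 𝕜 s) hu hv (by positivity)
    (by positivity) hweight)

lemma convexHull_extremePoints_convexHull_of_finite {s : Set E} (hs : s.Finite) :
    convexHull 𝕜 ((convexHull 𝕜 s).extremePoints 𝕜) = convexHull 𝕜 s := by
  lift s to Finset E using hs
  -- A minimal generating subset `T` has no redundant point, so it consists of extreme points.
  obtain ⟨T, -, hT_hull, hT_min⟩ := exists_minimal_le_of_wellFoundedLT
    (fun T : Finset E => convexHull 𝕜 (T : Set E) = convexHull 𝕜 (s : Set E)) s rfl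
  have hT_irredundant : ∀ x ∈ T, x ∉ convexHull 𝕜 (T.erase x : Set E) := by
    intro x hxT hx
    have herase : convexHull 𝕜 (T.erase x : Set E) = convexHull 𝕜 (s : Set E) := by
      rw [← hT_hull]
      refine (convexHull_mono (T.erase_subset x)).antisymm
        (convexHull_min (fun y hy => ?_) (convex_convexHull 𝕜 _))
      obtain rfl | hyx := eq_or_ne y x
      · exact hx
      · exact subset_convexHull 𝕜 _ (mem_erase.2 ⟨hyx, hy⟩)
    exact notMem_erase x T (hT_min herase (T.erase_subset x) hxT)
  have hT_extreme : (T : Set E) ⊆ (convexHull 𝕜 (s : Set E)).extremePoints 𝕜 := by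
    intro x hxT
    have hx := mem_extremePoints_convexHull_insert (hT_irredundant x hxT)
    rwa [← coe_insert, insert_erase hxT, hT_hull] at hx
  refine (convexHull_min extremePoints_subset (convex_convexHull 𝕜 _)).antisymm ?_
  exact hT_hull.ge.trans (convexHull_mono hT_extreme)

variable (𝕜) in
/-- `V(S)` for scenarios in an arbitrary vector space: the indices in `S` of the extreme points of
the polytope spanned by the scenarios in `S`. -/
def vertexIndices (ξ : ι → E) (S : Finset ι) : Finset ι :=
  S.filter fun t => ξ t ∈ (convexHull 𝕜 (ξ '' S)).extremePoints 𝕜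

variable (𝕜) in
/-- `N(S)` for scenarios in an arbitrary vector space: the indices of all scenarios in the polytope
spanned by the scenarios in `S`. -/
def hullIndices [Fintype ι] (ξ : ι → E) (S : Finset ι) : Finset ι :=
  univ.filter fun s => ξ s ∈ convexHull 𝕜 (ξ '' S)

lemma mem_of_mem_hullIndices [Fintype ι] {A : Set E} (hA : Convex 𝕜 A) {ξ : ι → E}
    {S : Finset ι} (hV : ∀ t ∈ vertexIndices 𝕜 ξ S, ξ t ∈ A) {s : ι}
    (hs : s ∈ hullIndices 𝕜 ξ S) : ξ s ∈ A := by
  have hvert : (convexHull 𝕜 (ξ '' S)).extremePoints 𝕜 ⊆ A := by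
    intro e he
    obtain ⟨t, ht, rfl⟩ := extremePoints_convexHull_subset he
    exact hV t (mem_filter.2 ⟨ht, he⟩)
  have hhull : convexHull 𝕜 (ξ '' S) ⊆ A := by
    rw [← convexHull_extremePoints_convexHull_of_finite (S.finite_toSet.image ξ)]
    exact convexHull_min hvert hA
  exact hhull (mem_filter.1 hs).2

end Polytope

section Indicator

variable {ι R : Type*} {P : Set ι}

lemma sum_indicator_one_sub_card_add_one_le [Ring R] [PartialOrder R] [IsOrderedRing R]
    {V : Finset ι} {s : ι} (h : ↑V ⊆ P → s ∈ P) :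
    ∑ t ∈ V, P.indicator (1 : ι → R) t - #V + 1 ≤ P.indicator 1 s := by
  have hsum : ∑ t ∈ V, P.indicator (1 : ι → R) t = #{t ∈ V | t ∈ P} := by
    simp [Set.indicator_apply]
  rw [hsum]
  by_cases hV : ↑V ⊆ P
  · simp [filter_true_of_mem fun _ ht => hV ht, h hV]
  · obtain ⟨t, htV, htP⟩ := Set.not_subset.1 hV
    have hcard : (#{t ∈ V | t ∈ P} : R) + 1 ≤ #V := by
      rw [← Nat.cast_add_one]
      exact Nat.mono_cast (card_lt_card (filter_ssubset.2 ⟨t, htV, htP⟩))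
    calc (#{t ∈ V | t ∈ P} : R) - #V + 1 ≤ 0 := by
          rw [sub_add_eq_add_sub]
          exact sub_nonpos.2 hcard
      _ ≤ P.indicator 1 s := Set.indicator_nonneg (fun _ _ => zero_le_one) s

lemma le_indicator_one_of_eq_zero_or_one [Zero R] [One R] [Preorder R] [ZeroLEOneClass R]
    {z : ι → R} (hz : ∀ t, z t = 0 ∨ z t = 1) (hP : ∀ t, z t = 1 → t ∈ P) :
    z ≤ P.indicator 1 := by
  intro t
  rcases hz t with h0 | h1
  · exact h0.le.trans (Set.indicator_nonneg (fun _ _ => zero_le_one) t)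
  · simp [h1, hP t h1]

end Indicator

section ChanceConstraint

variable {D E ι M R : Type*} [Fintype ι] [AddCommMonoid M] [PartialOrder M]

/-- The decisions `x ∈ X` that satisfy scenarios of total weight at least `b` (the CCP-feasible
points), where `A x` is the set of all parameters satisfied by `x`. -/
def chanceFeasible (X : Set D) (A : D → Set E) (ξ : ι → E) (π : ι → M) (b : M) : Set D :=
  {x | x ∈ X ∧ b ≤ ∑ s with ξ s ∈ A x, π s}

lemma mem_chanceFeasible_of_selection [IsOrderedAddMonoid M] [One R] [DecidableEq R]
    {X : Set D} {A : D → Set E} {ξ : ι → E} {π : ι → M} {b : M} (hπ : ∀ s, 0 ≤ π s) {x : D}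
    (hx : x ∈ X) {z : ι → R} (hweight : b ≤ ∑ t with z t = 1, π t)
    (hsel : ∀ t, z t = 1 → ξ t ∈ A x) : x ∈ chanceFeasible X A ξ π b :=
  ⟨hx, hweight.trans <| sum_le_sum_of_subset_of_nonneg
    (monotone_filter_right univ fun t _ => hsel t) fun t _ _ => hπ t⟩

end ChanceConstraint

section Reformulation

variable {D E ι M 𝕜 : Type*} [Fintype ι] [DecidableEq ι] [AddCommMonoid M] [PartialOrder M]
  [Field 𝕜] [LinearOrder 𝕜] [IsStrictOrderedRing 𝕜] [AddCommGroup E] [Module 𝕜 E]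

/-- The inequalities `z_s ≥ Σ_{t ∈ V(S)} z_t - |V(S)| + 1` for `s ∈ N(S) \ V(S)`. -/
def SatisfiesHullCuts (ξ : ι → E) (S : Finset ι) (z : ι → 𝕜) : Prop :=
  ∀ s ∈ hullIndices 𝕜 ξ S \ vertexIndices 𝕜 ξ S,
    ∑ t ∈ vertexIndices 𝕜 ξ S, z t - #(vertexIndices 𝕜 ξ S) + 1 ≤ z s

lemma satisfiesHullCuts_indicator {A : Set E} (hA : Convex 𝕜 A) (ξ : ι → E) (S : Finset ι) :
    SatisfiesHullCuts ξ S ((ξ ⁻¹' A).indicator (1 : ι → 𝕜)) := fun _ hs =>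
  sum_indicator_one_sub_card_add_one_le fun hV =>
    mem_of_mem_hullIndices hA hV (mem_sdiff.1 hs).1

variable (𝕜) in
/-- The feasible set, in the variables `(x, z)`, of the mixed-integer reformulation of
`chanceFeasible` with the hull inequalities added. -/
def hullCutReformulation (X : Set D) (A : D → Set E) (ξ : ι → E) (π : ι → M) (b : M)
    (S : Finset ι) : Set (D × (ι → 𝕜)) :=
  {q | q.1 ∈ X ∧ (∀ t, q.2 t = 0 ∨ q.2 t = 1) ∧ b ≤ ∑ t with q.2 t = 1, π t ∧
    (∀ t, q.2 t = 1 → ξ t ∈ A q.1) ∧ SatisfiesHullCuts ξ S q.2}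

variable {X : Set D} {A : D → Set E} {ξ : ι → E} {π : ι → M} {b : M}

lemma mk_indicator_mem_hullCutReformulation {x : D} (hx : x ∈ chanceFeasible X A ξ π b)
    (hA : Convex 𝕜 (A x)) (S : Finset ι) :
    (x, (ξ ⁻¹' A x).indicator 1) ∈ hullCutReformulation 𝕜 X A ξ π b S := by
  refine ⟨hx.1, fun t => Set.indicator_eq_zero_or_self _ _ t, ?_, fun t => ?_,
    satisfiesHullCuts_indicator hA ξ S⟩
  · simpa only [Set.indicator_eq_one_iff_mem] using! hx.2
  · exact (Set.indicator_eq_one_iff_mem 𝕜).1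

lemma image_fst_hullCutReformulation [IsOrderedAddMonoid M] (hπ : ∀ s, 0 ≤ π s)
    (hA : ∀ x ∈ X, Convex 𝕜 (A x)) (S : Finset ι) :
    Prod.fst '' hullCutReformulation 𝕜 X A ξ π b S = chanceFeasible X A ξ π b := by
  ext x
  constructor
  · rintro ⟨⟨x, z⟩, ⟨hx, -, hweight, hsel, -⟩, rfl⟩
    exact mem_chanceFeasible_of_selection hπ hx hweight hsel
  · exact fun hx => ⟨_, mk_indicator_mem_hullCutReformulation hx (hA x hx.1) S, rfl⟩

theorem statement_7_general [IsOrderedAddMonoid M] {α : Type*} [InfSet α] (X : Set D) (F : D → α)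
    (A : D → Set E) (ξ : ι → E) (π : ι → M) (b : M) (hπ : ∀ s, 0 ≤ π s)
    (hA : ∀ x ∈ X, Convex 𝕜 (A x)) (S : Finset ι) :
    (∀ x ∈ X, ∀ z : ι → 𝕜, (∀ t, z t = 0 ∨ z t = 1) → b ≤ ∑ t with z t = 1, π t →
      (∀ t, z t = 1 → ξ t ∈ A x) →
      ∃ z' : ι → 𝕜, (∀ t, z' t = 0 ∨ z' t = 1) ∧ z ≤ z' ∧ b ≤ ∑ t with z' t = 1, π t ∧
        (∀ t, z' t = 1 → ξ t ∈ A x) ∧ SatisfiesHullCuts ξ S z') ∧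
    sInf (F '' chanceFeasible X A ξ π b) =
      sInf ((fun q => F q.1) '' hullCutReformulation 𝕜 X A ξ π b S) := by
  constructor
  · intro x hx z hz hweight hsel
    have hx_feas := mem_chanceFeasible_of_selection hπ hx hweight hsel
    obtain ⟨-, hz', htight⟩ := mk_indicator_mem_hullCutReformulation hx_feas (hA x hx) S
    exact ⟨_, hz', le_indicator_one_of_eq_zero_or_one hz hsel, htight⟩
  · rw [← image_fst_hullCutReformulation hπ hA S, Set.image_image]

end Reformulation

theorem statement_7 {N d p : ℕ}
    (hN : 1 ≤ N) (hd : 1 ≤ d) (hp : 1 ≤ p)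
    (X : Set (Fin d → ℝ)) (F : (Fin d → ℝ) → ℝ)
    (c : (Fin d → ℝ) → (Fin p → ℝ) → ℝ) (ξ : Fin N → (Fin p → ℝ))
    (π : Fin N → ℝ) (τ : ℝ)
    (hπ : ∀ s, 0 < π s) (hπsum : ∑ s, π s = 1) (hτ0 : 0 < τ) (hτ1 : τ < 1)
    (hqc : ∀ x ∈ X, QuasiconvexOn ℝ Set.univ (c x))
    (S : Finset (Fin N)) :
    (∀ x ∈ X, ∀ z : Fin N → ℝ, (∀ t, z t = 0 ∨ z t = 1) →
      1 - τ ≤ ∑ t ∈ Finset.univ.filter (fun t => z t = 1), π t →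
      (∀ t, z t = 1 → c x (ξ t) ≤ 0) →
      ∃ z' : Fin N → ℝ, (∀ t, z' t = 0 ∨ z' t = 1) ∧ (∀ t, z t ≤ z' t) ∧
        (1 - τ ≤ ∑ t ∈ Finset.univ.filter (fun t => z' t = 1), π t) ∧
        (∀ t, z' t = 1 → c x (ξ t) ≤ 0) ∧
        (∀ s ∈ hullSet ξ S \ vertSet ξ S,
          (∑ t ∈ vertSet ξ S, z' t) - ((vertSet ξ S).card : ℝ) + 1 ≤ z' s)) ∧
    Fstar X F c ξ π τ =
      sInf ((fun q : (Fin d → ℝ) × (Fin N → ℝ) => (F q.1 : EReal)) ''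
        {q | q.1 ∈ X ∧ (∀ t, q.2 t = 0 ∨ q.2 t = 1) ∧
          (1 - τ ≤ ∑ t ∈ Finset.univ.filter (fun t => q.2 t = 1), π t) ∧
          (∀ t, q.2 t = 1 → c q.1 (ξ t) ≤ 0) ∧
          (∀ s ∈ hullSet ξ S \ vertSet ξ S,
            (∑ t ∈ vertSet ξ S, q.2 t) - ((vertSet ξ S).card : ℝ) + 1 ≤ q.2 s)}) :=
  statement_7_general X (fun x => (F x : EReal)) (fun x => {e | c x e ≤ 0}) ξ π (1 - τ)
    (fun s => (hπ s).le) (fun x hx => by simpa using hqc x hx 0) S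
end
end

section
/- Let 𝐒_τ denote the collection of all minimal subsets of {1,…,N}. Then the set of CCP-feasible points equals the union over S ∈ 𝐒_τ of the sets 𝒳(S) := {x ∈ 𝒳 : c(x, ξ^(s)) ≤ 0 for all s ∈ S}. -/
open scoped Classical
open Finset

noncomputable section

variable {N d p : ℕ}

section MinimalCover

variable {ι M : Type*}

/-- A finite index set is a minimal cover of the threshold `b` when its total weight reaches `b` and
exceeds it by less than each of its own weights. This is `IsMinimalSubset` for arbitrary weights,
with threshold `b = 1 - τ`; the excess is compared by addition, since `M` need not have
subtraction. -/
def IsMinimalCover [AddCommMonoid M] [Preorder M] (w : ι → M) (b : M) (S : Finset ι) : Prop :=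
  b ≤ ∑ s ∈ S, w s ∧ ∀ t ∈ S, ∑ s ∈ S, w s < b + w t

variable [AddCommMonoid M] [LinearOrder M] [IsOrderedCancelAddMonoid M]
  {w : ι → M} {b : M} {S T : Finset ι}

theorem isMinimalCover_of_minimal (hS : Minimal (fun R : Finset ι ↦ b ≤ ∑ s ∈ R, w s) S) :
    IsMinimalCover w b S := by
  refine ⟨hS.prop, fun t ht ↦ ?_⟩
  have erase_lt : ∑ s ∈ S.erase t, w s < b :=
    not_le.mp (hS.not_prop_of_lt (erase_ssubset ht))
  calc
    ∑ s ∈ S, w s = ∑ s ∈ S.erase t, w s + w t := (sum_erase_add S w ht).symm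
    _ < b + w t := by gcongr

theorem exists_subset_isMinimalCover (hT : b ≤ ∑ s ∈ T, w s) :
    ∃ S ⊆ T, IsMinimalCover w b S :=
  have ⟨S, hST, hS⟩ := exists_minimal_le_of_wellFoundedLT (fun R ↦ b ≤ ∑ s ∈ R, w s) T hT
  ⟨S, hST, isMinimalCover_of_minimal hS⟩

theorem le_sum_iff_exists_subset_isMinimalCover (hw : ∀ s ∈ T, 0 ≤ w s) :
    b ≤ ∑ s ∈ T, w s ↔ ∃ S ⊆ T, IsMinimalCover w b S := by
  refine ⟨exists_subset_isMinimalCover, ?_⟩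
  rintro ⟨S, hST, hS⟩
  exact hS.1.trans (sum_le_sum_of_subset_of_nonneg hST fun s hs _ ↦ hw s hs)

theorem statement_11_general {α : Type*} [Fintype ι] (X : Set α) (P : α → ι → Prop)
    [∀ x, DecidablePred (P x)] (hw : ∀ s, 0 ≤ w s) :
    {x | x ∈ X ∧ b ≤ ∑ s with P x s, w s} =
      ⋃ S ∈ {S : Finset ι | IsMinimalCover w b S}, {x | x ∈ X ∧ ∀ s ∈ S, P x s} := by
  ext x
  have satisfied_iff : b ≤ ∑ s with P x s, w s ↔ ∃ S, IsMinimalCover w b S ∧ ∀ s ∈ S, P x s := by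
    simp only [le_sum_iff_exists_subset_isMinimalCover fun s _ ↦ hw s, subset_iff, mem_filter_univ,
      and_comm]
  simp only [Set.mem_ofPred_eq, Set.mem_iUnion, exists_prop, satisfied_iff, ← exists_and_left,
    and_left_comm]

end MinimalCover

theorem statement_11 {N d p : ℕ} (hN : 1 ≤ N) (hd : 1 ≤ d) (hp : 1 ≤ p)
    (X : Set (Fin d → ℝ)) (c : (Fin d → ℝ) → (Fin p → ℝ) → ℝ)
    (ξ : Fin N → (Fin p → ℝ)) (π : Fin N → ℝ) (τ : ℝ)
    (hπ : ∀ s, 0 < π s) (hπsum : ∑ s, π s = 1) (hτ0 : 0 < τ) (hτ1 : τ < 1) :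
    ccpFeasible X c ξ π τ =
      ⋃ S ∈ {S : Finset (Fin N) | IsMinimalSubset π τ S},
        {x | x ∈ X ∧ ∀ s ∈ S, c x (ξ s) ≤ 0} :=
  statement_11_general X (fun x s ↦ c x (ξ s) ≤ 0) fun s ↦ (hπ s).le
end
end

section
/- Let 𝐒_τ denote the collection of all minimal subsets of {1,…,N}. Then F*_τ = min_{S ∈ 𝐒_τ} ν(S), where both sides are taken as infima in the extended reals (with value +∞ if the corresponding feasible set is empty). -/
open scoped Classical
open Finset

noncomputable section

variable {N d p : ℕ}

/-!
A decision that satisfies scenarios of total probability at least `1 - τ` satisfies all the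
scenarios of some inclusion-minimal set of probability at least `1 - τ`, and conversely. For
nonnegative weights these sets are exactly the minimal subsets: deleting any single scenario
already drops the probability below `1 - τ`. So the feasible region is the union, over the minimal
subsets, of the regions of the subproblems, and the infimum over a union is the infimum of the
infima.
-/

theorem iff_exists_minimal_le {α : Type*} [Preorder α] [WellFoundedLT α] {P : α → Prop}
    (hP : Monotone P) {a : α} : P a ↔ ∃ m, Minimal P m ∧ m ≤ a where
  mp ha :=
    let ⟨m, hma, hm⟩ := exists_minimal_le_of_wellFoundedLT P a ha
    ⟨m, hm, hma⟩
  mpr := fun ⟨_, hm, hma⟩ ↦ hP hma hm.prop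

section WeightedSets

variable {ι E M : Type*} [AddCommMonoid M] {w : ι → M}

theorem monotone_le_sum [Preorder M] [IsOrderedAddMonoid M] (hw : ∀ i, 0 ≤ w i) (θ : M) :
    Monotone fun S : Finset ι ↦ θ ≤ ∑ i ∈ S, w i :=
  fun _ _ hST hθ ↦ hθ.trans (sum_mono_set_of_nonneg hw hST)

theorem minimal_le_sum_iff [LinearOrder M] [IsOrderedCancelAddMonoid M] (hw : ∀ i, 0 ≤ w i)
    {θ : M} {S : Finset ι} :
    Minimal (fun T ↦ θ ≤ ∑ i ∈ T, w i) S ↔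
      θ ≤ ∑ i ∈ S, w i ∧ ∀ t ∈ S, ∑ i ∈ S, w i < θ + w t := by
  rw [minimal_iff_forall_erase fun _ _ hT hTS ↦ monotone_le_sum hw θ hTS hT]
  refine and_congr_right fun _ ↦ forall₂_congr fun t ht ↦ ?_
  rw [not_le, ← sum_erase_add S w ht, add_lt_add_iff_right]

theorem le_sum_filter_iff_exists_minimal [Fintype ι] [Preorder M] [IsOrderedAddMonoid M]
    (hw : ∀ i, 0 ≤ w i) (θ : M) (q : ι → Prop) [DecidablePred q] :
    θ ≤ ∑ i with q i, w i ↔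
      ∃ S, Minimal (fun T ↦ θ ≤ ∑ i ∈ T, w i) S ∧ ∀ i ∈ S, q i := by
  rw [iff_exists_minimal_le (monotone_le_sum hw θ)]
  simp only [subset_iff, mem_filter_univ]

theorem setOf_le_sum_filter_eq_biUnion [Fintype ι] [Preorder M] [IsOrderedAddMonoid M]
    (hw : ∀ i, 0 ≤ w i) (θ : M) (X : Set E) (sat : E → ι → Prop)
    [∀ x, DecidablePred (sat x)] :
    {x | x ∈ X ∧ θ ≤ ∑ i with sat x i, w i} =
      ⋃ S ∈ {S : Finset ι | Minimal (fun T ↦ θ ≤ ∑ i ∈ T, w i) S},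
        {x | x ∈ X ∧ ∀ i ∈ S, sat x i} := by
  ext x
  simp only [le_sum_filter_iff_exists_minimal hw, Set.mem_ofPred_eq, Set.mem_iUnion, exists_prop]
  tauto

theorem statement_12_general {L : Type*} [CompleteLattice L] [Fintype ι] [LinearOrder M]
    [IsOrderedCancelAddMonoid M] (f : E → L) (X : Set E) (sat : E → ι → Prop)
    [∀ x, DecidablePred (sat x)] (hw : ∀ i, 0 ≤ w i) (θ : M) :
    ⨅ x ∈ {x | x ∈ X ∧ θ ≤ ∑ i with sat x i, w i}, f x =
      ⨅ S ∈ {S : Finset ι | θ ≤ ∑ i ∈ S, w i ∧ ∀ t ∈ S, ∑ i ∈ S, w i < θ + w t},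
        ⨅ x ∈ {x | x ∈ X ∧ ∀ i ∈ S, sat x i}, f x := by
  simp only [setOf_le_sum_filter_eq_biUnion hw, iInf_iUnion, minimal_le_sum_iff hw]

end WeightedSets

theorem statement_12 {N d p : ℕ}
    (hN : 1 ≤ N) (hd : 1 ≤ d) (hp : 1 ≤ p)
    (X : Set (Fin d → ℝ)) (F : (Fin d → ℝ) → ℝ)
    (c : (Fin d → ℝ) → (Fin p → ℝ) → ℝ) (ξ : Fin N → (Fin p → ℝ))
    (π : Fin N → ℝ) (τ : ℝ)
    (hπ : ∀ s, 0 < π s) (hπsum : ∑ s, π s = 1) (hτ0 : 0 < τ) (hτ1 : τ < 1)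
    :
    Fstar X F c ξ π τ =
      sInf ((fun S => nuVal X F c ξ S) '' {S : Finset (Fin N) | IsMinimalSubset π τ S}) := by
  simpa only [Fstar, nuVal, einf, ccpFeasible, IsMinimalSubset, sInf_image] using
    statement_12_general (fun x ↦ (F x : EReal)) X (fun x s ↦ c x (ξ s) ≤ 0) (fun s ↦ (hπ s).le)
      (1 - τ)
end
end
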